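/- arXiv:math/0512636 — 3 statements merged into one kernel-verified Lean document; each statement's English description precedes it below -/
import Mathlib

section
/- There is an absolute constant c > 0 such that for every n ≥ 2 and every Boolean function f : {0,1}^n → {0,1} with expectation μ = E f, the sum of the squared influences satisfies Σ_{i=1}^n I_i(f)² ≥ c · μ²(1−μ)² · (log n)² / n. -/
open Finset

/-- Expectation with respect to the uniform measure on the discrete cube `{0,1}^n`. -/
noncomputable def cubeE {n : ℕ} (f : (Fin n → Bool) → ℝ) : ℝ :=
  (∑ x : Fin n → Bool, f x) / 2 ^ n

/-- `x ⊕ e_i` : flip the `i`-th coordinate of `x`. -/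
def flipAt {n : ℕ} (x : Fin n → Bool) (i : Fin n) : Fin n → Bool :=
  Function.update x i (!x i)

/-- Influence of the `i`-th variable of a Boolean function,
`I_i(f) = Pr_x[f(x) ≠ f(x ⊕ e_i)]` under the uniform measure. -/
noncomputable def infl {n : ℕ} (f : (Fin n → Bool) → Bool) (i : Fin n) : ℝ :=
  cubeE (fun x => if f x ≠ f (flipAt x i) then 1 else 0)

/-- Expectation of a Boolean function under the uniform measure. -/
noncomputable def meanB {n : ℕ} (f : (Fin n → Bool) → Bool) : ℝ :=
  cubeE (fun x => if f x then 1 else 0)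

/-- Conditional expectation given the first `j` coordinates: `condE f j x` is the
average of `f` over all `y` agreeing with `x` in the first `j` coordinates. -/
noncomputable def condE {n : ℕ} (f : (Fin n → Bool) → ℝ) (j : ℕ) (x : Fin n → Bool) : ℝ :=
  (∑ y : Fin n → Bool, if ∀ k : Fin n, (k : ℕ) < j → y k = x k then f y else 0) / 2 ^ (n - j)

/-- The Dirichlet form `E(f,f) = E_x Σ_i (f(x) - f(x ⊕ e_i))²`. -/
noncomputable def energy {n : ℕ} (f : (Fin n → Bool) → ℝ) : ℝ :=
  cubeE (fun x => ∑ i : Fin n, (f x - f (flipAt x i)) ^ 2)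

/-- Entropy of a nonnegative function: `Ent(g) = E[g log g] - E g · log E g`
(the convention `0 log 0 = 0` holds since `Real.log 0 = 0`). -/
noncomputable def ent {n : ℕ} (g : (Fin n → Bool) → ℝ) : ℝ :=
  cubeE (fun x => g x * Real.log (g x)) - cubeE g * Real.log (cubeE g)

/-!
Split `f` along the first coordinate as `f = g ± h`, where `g` averages `f` over that coordinate and
`h` is the corresponding martingale difference. Variance and Dirichlet form split accordingly, and
the logarithmic Sobolev inequality applied to `h` gives
`s · E h² ≤ energy h + exp (s - 1) · (E |h|)²` for every real `s`, where `2 E |h|` is the first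
`L¹`-influence of `f`. As averaging does not increase the other `L¹`-influences, induction on the
dimension yields
`s · Var f ≤ energy f + exp (s - 1) / 4 · ∑ i, (E |f(x) - f(x ⊕ e_i)|)²`.
For a Boolean function the energy is the total influence, which Cauchy-Schwarz bounds by
`√(n ∑ I_i²)`, and `s = log n / 2` gives the theorem when `∑ I_i² ≤ 1`; otherwise already
`log n ≤ 2 √n` suffices.
-/

open scoped BigOperators

section Expectation

variable {n : ℕ}

lemma cubeE_eq_expect (f : (Fin n → Bool) → ℝ) : cubeE f = 𝔼 x, f x := by
  simp [cubeE, Fintype.expect_eq_sum_div_card]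

lemma cubeE_add (f g : (Fin n → Bool) → ℝ) :
    cubeE (fun x => f x + g x) = cubeE f + cubeE g := by
  simp only [cubeE_eq_expect, expect_add_distrib]

lemma cubeE_sub (f g : (Fin n → Bool) → ℝ) :
    cubeE (fun x => f x - g x) = cubeE f - cubeE g := by
  simp only [cubeE_eq_expect, expect_sub_distrib]

lemma cubeE_const_mul (c : ℝ) (f : (Fin n → Bool) → ℝ) :
    cubeE (fun x => c * f x) = c * cubeE f := by
  simp only [cubeE_eq_expect, mul_expect]

lemma cubeE_sum {ι : Type*} (s : Finset ι) (f : ι → (Fin n → Bool) → ℝ) :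
    cubeE (fun x => ∑ i ∈ s, f i x) = ∑ i ∈ s, cubeE (f i) := by
  simp only [cubeE_eq_expect, expect_sum_comm]

lemma cubeE_const (c : ℝ) : cubeE (fun _ : Fin n → Bool => c) = c := by
  rw [cubeE_eq_expect, Fintype.expect_const]

lemma cubeE_mono {f g : (Fin n → Bool) → ℝ} (h : ∀ x, f x ≤ g x) : cubeE f ≤ cubeE g := by
  simpa only [cubeE_eq_expect] using expect_le_expect fun x _ => h x

lemma cubeE_nonneg {f : (Fin n → Bool) → ℝ} (h : ∀ x, 0 ≤ f x) : 0 ≤ cubeE f := by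
  simpa only [cubeE_eq_expect] using expect_nonneg fun x _ => h x

lemma cubeE_sq_nonneg (f : (Fin n → Bool) → ℝ) : 0 ≤ cubeE (fun x => f x ^ 2) :=
  cubeE_nonneg fun x => sq_nonneg (f x)

lemma eq_zero_of_cubeE_sq_eq_zero {f : (Fin n → Bool) → ℝ} (h : cubeE (fun x => f x ^ 2) = 0) :
    f = 0 := by
  rw [cubeE_eq_expect, Fintype.expect_eq_zero_iff_of_nonneg fun x => sq_nonneg (f x)] at h
  exact funext fun x => pow_eq_zero_iff two_ne_zero |>.mp (congrFun h x)

lemma cubeE_fin_zero (f : (Fin 0 → Bool) → ℝ) : cubeE f = f default := by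
  rw [cubeE_eq_expect, Fintype.expect_eq_sum_div_card, Fintype.sum_subsingleton f default]
  simp

lemma cubeE_mul_le_sqrt_mul_sqrt (f g : (Fin n → Bool) → ℝ) :
    cubeE (fun x => f x * g x) ≤ √(cubeE fun x => f x ^ 2) * √(cubeE fun x => g x ^ 2) := by
  rw [← Real.sqrt_mul (cubeE_sq_nonneg f)]
  refine Real.le_sqrt_of_sq_le ?_
  simpa only [cubeE_eq_expect] using expect_mul_sq_le_sq_mul_sq univ f g

lemma sq_sqrt_cubeE_sub_sqrt_cubeE_le (f g : (Fin n → Bool) → ℝ) :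
    (√(cubeE fun x => f x ^ 2) - √(cubeE fun x => g x ^ 2)) ^ 2
      ≤ cubeE (fun x => (f x - g x) ^ 2) := by
  have expand : cubeE (fun x => (f x - g x) ^ 2)
      = cubeE (fun x => f x ^ 2) - 2 * cubeE (fun x => f x * g x) + cubeE (fun x => g x ^ 2) := by
    simp only [sub_sq, mul_assoc, cubeE_add, cubeE_sub, cubeE_const_mul]
  rw [expand, sub_sq, Real.sq_sqrt (cubeE_sq_nonneg f), Real.sq_sqrt (cubeE_sq_nonneg g)]
  linarith [cubeE_mul_le_sqrt_mul_sqrt f g]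

end Expectation

section Faces

variable {n : ℕ}

/-- The restriction of `f` to the face of the cube on which the first coordinate equals `b`, as a
function on the cube of dimension one less. -/
def face (f : (Fin (n + 1) → Bool) → ℝ) (b : Bool) : (Fin n → Bool) → ℝ :=
  fun x => f (Fin.cons b x)

lemma cubeE_succ (f : (Fin (n + 1) → Bool) → ℝ) :
    cubeE f = (cubeE (face f false) + cubeE (face f true)) / 2 := by
  have split : ∑ x, f x = ∑ b, ∑ x, face f b x := by
    rw [← (Fin.consEquiv fun _ => Bool).sum_comp f, Fintype.sum_prod_type]
    rfl
  simp only [cubeE, split, Fintype.sum_bool, pow_succ]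
  ring

/-- The average of `f` over its first coordinate, i.e. its conditional expectation given all the
other coordinates. -/
noncomputable def headMean (f : (Fin (n + 1) → Bool) → ℝ) : (Fin n → Bool) → ℝ :=
  fun x => (face f false x + face f true x) / 2

/-- Half the difference of `f` in its first coordinate: the martingale difference `f - headMean f`
equals `headDiff f` on the face `x₀ = false` and `-headDiff f` on the face `x₀ = true`. -/
noncomputable def headDiff (f : (Fin (n + 1) → Bool) → ℝ) : (Fin n → Bool) → ℝ :=
  fun x => (face f false x - face f true x) / 2

lemma cubeE_headMean (f : (Fin (n + 1) → Bool) → ℝ) : cubeE (headMean f) = cubeE f := by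
  unfold headMean
  simp only [div_eq_inv_mul, cubeE_const_mul, cubeE_add, cubeE_succ f]

lemma flipAt_cons_zero (b : Bool) (x : Fin n → Bool) :
    flipAt (Fin.cons b x) 0 = Fin.cons (!b) x := by
  simp [flipAt, Fin.update_cons_zero]

lemma flipAt_cons_succ (b : Bool) (x : Fin n → Bool) (i : Fin n) :
    flipAt (Fin.cons b x) i.succ = Fin.cons b (flipAt x i) := by
  simp [flipAt, Fin.cons_update]

lemma energy_eq_sum (f : (Fin n → Bool) → ℝ) :
    energy f = ∑ i, cubeE (fun x => (f x - f (flipAt x i)) ^ 2) :=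
  cubeE_sum univ fun i x => (f x - f (flipAt x i)) ^ 2

lemma energy_fin_zero (f : (Fin 0 → Bool) → ℝ) : energy f = 0 := by
  simp [energy_eq_sum]

lemma energy_succ (f : (Fin (n + 1) → Bool) → ℝ) :
    energy f = (energy (face f false) + energy (face f true)) / 2
      + cubeE (fun x => (face f false x - face f true x) ^ 2) := by
  have head : headMean (fun x => (f x - f (flipAt x 0)) ^ 2)
      = fun x => (face f false x - face f true x) ^ 2 := by
    funext x
    simp only [headMean, face, flipAt_cons_zero, Bool.not_false, Bool.not_true]
    ring
  have tail (i : Fin n) : cubeE (fun x => (f x - f (flipAt x i.succ)) ^ 2)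
      = (cubeE (fun x => (face f false x - face f false (flipAt x i)) ^ 2)
        + cubeE (fun x => (face f true x - face f true (flipAt x i)) ^ 2)) / 2 := by
    rw [cubeE_succ]
    unfold face
    simp only [flipAt_cons_succ]
  simp only [energy_eq_sum, Fin.sum_univ_succ, tail, ← sum_div, sum_add_distrib]
  rw [← head, cubeE_headMean, add_comm]

lemma ent_succ (g : (Fin (n + 1) → Bool) → ℝ) :
    ent g = (ent (face g false) + ent (face g true)) / 2
      + ((cubeE (face g false) * Real.log (cubeE (face g false))
          + cubeE (face g true) * Real.log (cubeE (face g true))) / 2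
        - cubeE g * Real.log (cubeE g)) := by
  rw [ent, cubeE_succ fun x => g x * Real.log (g x)]
  unfold ent face
  ring

end Faces

section LogSobolev

variable {n : ℕ}

lemma mul_log_le_mul_log_add_sq_div_sub {m x : ℝ} (hm : 0 < m) (hx : 0 ≤ x) :
    x * Real.log x ≤ x * Real.log m + x ^ 2 / m - x := by
  rcases hx.eq_or_lt with rfl | hx
  · simp
  · have log_le := Real.log_le_sub_one_of_pos (div_pos hx hm)
    rw [Real.log_div hx.ne' hm.ne'] at log_le
    calc x * Real.log x = x * Real.log m + x * (Real.log x - Real.log m) := by ring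
      _ ≤ x * Real.log m + x * (x / m - 1) := by gcongr
      _ = x * Real.log m + x ^ 2 / m - x := by ring

-- The entropy of a two-point variable is at most its variance divided by its mean.
lemma two_point_log_sobolev (p q : ℝ) :
    (p ^ 2 * Real.log (p ^ 2) + q ^ 2 * Real.log (q ^ 2)) / 2
      - (p ^ 2 + q ^ 2) / 2 * Real.log ((p ^ 2 + q ^ 2) / 2) ≤ (p - q) ^ 2 := by
  have mean_nonneg : 0 ≤ (p ^ 2 + q ^ 2) / 2 := by positivity
  generalize hm : (p ^ 2 + q ^ 2) / 2 = m at mean_nonneg ⊢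
  rcases mean_nonneg.eq_or_lt with hm0 | hm0
  · obtain rfl : p = 0 := by nlinarith
    obtain rfl : q = 0 := by nlinarith
    simp [← hm0]
  have second_moment_le : (p ^ 4 + q ^ 4) / m ≤ 2 * m + 2 * (p - q) ^ 2 := by
    rw [div_le_iff₀ hm0, ← hm]
    linarith [sq_nonneg ((p - q) ^ 2)]
  have ent_le_p := mul_log_le_mul_log_add_sq_div_sub hm0 (sq_nonneg p)
  have ent_le_q := mul_log_le_mul_log_add_sq_div_sub hm0 (sq_nonneg q)
  calc (p ^ 2 * Real.log (p ^ 2) + q ^ 2 * Real.log (q ^ 2)) / 2 - m * Real.log m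
      ≤ (p ^ 2 * Real.log m + (p ^ 2) ^ 2 / m - p ^ 2
          + (q ^ 2 * Real.log m + (q ^ 2) ^ 2 / m - q ^ 2)) / 2 - m * Real.log m := by gcongr
    _ = (p ^ 4 + q ^ 4) / m / 2 - m := by linear_combination (Real.log m - 1) * hm
    _ ≤ (p - q) ^ 2 := by linarith [second_moment_le]

theorem ent_sq_le_energy : ∀ {n : ℕ} (f : (Fin n → Bool) → ℝ), ent (fun x => f x ^ 2) ≤ energy f
  | 0, f => by simp [ent, cubeE_fin_zero, energy_fin_zero]
  | n + 1, f => by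
    have ih₀ := ent_sq_le_energy (face f false)
    have ih₁ := ent_sq_le_energy (face f true)
    have minkowski := sq_sqrt_cubeE_sub_sqrt_cubeE_le (face f false) (face f true)
    have two_point := two_point_log_sobolev
      √(cubeE fun x => face f false x ^ 2) √(cubeE fun x => face f true x ^ 2)
    rw [Real.sq_sqrt (cubeE_sq_nonneg _), Real.sq_sqrt (cubeE_sq_nonneg _)] at two_point
    have face_sq (b : Bool) : face (fun x => f x ^ 2) b = fun x => face f b x ^ 2 := rfl
    rw [ent_succ, energy_succ, cubeE_succ]
    simp only [face_sq]
    linarith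

lemma sq_mul_log_sub_le_sq_mul_log_sq {t : ℝ} (ht : 0 < t) (u : ℝ) :
    (2 * Real.log t + 2) * u ^ 2 - 2 * t * |u| ≤ u ^ 2 * Real.log (u ^ 2) := by
  rcases eq_or_ne u 0 with rfl | hu
  · simp
  have hu_pos : 0 < |u| := abs_pos.mpr hu
  have log_le := Real.log_le_sub_one_of_pos (div_pos ht hu_pos)
  rw [Real.log_div ht.ne' hu_pos.ne', Real.log_abs] at log_le
  have sq_mul_div : |u| ^ 2 * (t / |u|) = t * |u| := by field_simp
  calc (2 * Real.log t + 2) * u ^ 2 - 2 * t * |u|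
      = 2 * |u| ^ 2 * (Real.log t - (t / |u| - 1)) := by
        rw [← sq_abs u]; linear_combination 2 * sq_mul_div
    _ ≤ 2 * |u| ^ 2 * Real.log u := by gcongr; linarith
    _ = u ^ 2 * Real.log (u ^ 2) := by rw [sq_abs, Real.log_pow]; push_cast; ring

lemma mul_cubeE_sq_sub_le_cubeE_sq_mul_log_sq {t : ℝ} (ht : 0 < t) (f : (Fin n → Bool) → ℝ) :
    (2 * Real.log t + 2) * cubeE (fun x => f x ^ 2) - 2 * t * cubeE (fun x => |f x|)
      ≤ cubeE (fun x => f x ^ 2 * Real.log (f x ^ 2)) := by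
  rw [← cubeE_const_mul, ← cubeE_const_mul, ← cubeE_sub]
  exact cubeE_mono fun x => sq_mul_log_sub_le_sq_mul_log_sq ht (f x)

-- The tangent-line form of `E f² · log (E f² / (E |f|)²) ≤ ent f²`, in which no `log 0` can occur.
lemma mul_cubeE_sq_sub_le_ent_sq (s : ℝ) (f : (Fin n → Bool) → ℝ) :
    s * cubeE (fun x => f x ^ 2) - Real.exp (s - 1) * cubeE (fun x => |f x|) ^ 2
      ≤ ent (fun x => f x ^ 2) := by
  rcases (cubeE_sq_nonneg f).eq_or_lt with hA | hA
  · obtain rfl := eq_zero_of_cubeE_sq_eq_zero hA.symm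
    simp [ent, cubeE_const]
  set A := cubeE fun x => f x ^ 2
  set B := cubeE fun x => |f x|
  set τ := Real.exp ((s - 1) / 2)
  have hτ : 0 < τ := Real.exp_pos _
  have exp_eq : Real.exp (s - 1) = τ ^ 2 := by rw [← Real.exp_nat_mul]; push_cast; ring_nf
  have log_eq : 2 * Real.log (√A * τ) = Real.log A + (s - 1) := by
    rw [Real.log_mul (Real.sqrt_pos.mpr hA).ne' hτ.ne', Real.log_sqrt hA.le, Real.log_exp]
    ring
  have young : 2 * (√A * τ) * B ≤ A + τ ^ 2 * B ^ 2 := by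
    linarith [sq_nonneg (√A - τ * B), Real.sq_sqrt hA.le]
  have log_bound : (2 * Real.log (√A * τ) + 2) * A - 2 * (√A * τ) * B
      ≤ cubeE (fun x => f x ^ 2 * Real.log (f x ^ 2)) :=
    mul_cubeE_sq_sub_le_cubeE_sq_mul_log_sq (mul_pos (Real.sqrt_pos.mpr hA) hτ) f
  rw [log_eq] at log_bound
  rw [ent, exp_eq]
  linarith

end LogSobolev

section MartingaleDecomposition

variable {n : ℕ}

/-- The variance of `f` under the uniform measure. -/
noncomputable def cubeVar (f : (Fin n → Bool) → ℝ) : ℝ :=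
  cubeE (fun x => f x ^ 2) - cubeE f ^ 2

/-- The `L¹`-influence `E |f(x) - f(x ⊕ e_i)|` of the `i`-th variable of a real-valued function; it
agrees with `infl` on Boolean functions. -/
noncomputable def l1Infl (f : (Fin n → Bool) → ℝ) (i : Fin n) : ℝ :=
  cubeE (fun x => |f x - f (flipAt x i)|)

lemma cubeVar_succ (f : (Fin (n + 1) → Bool) → ℝ) :
    cubeVar f = cubeVar (headMean f) + cubeE (fun x => headDiff f x ^ 2) := by
  have pythagoras : headMean (fun x => f x ^ 2)
      = fun x => headMean f x ^ 2 + headDiff f x ^ 2 := by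
    funext x; simp only [headMean, headDiff, face]; ring
  rw [cubeVar, ← cubeE_headMean fun x => f x ^ 2, pythagoras, cubeE_add, cubeVar, cubeE_headMean]
  ring

lemma energy_parallelogram (f g : (Fin n → Bool) → ℝ) :
    (energy f + energy g) / 2
      = energy (fun x => (f x + g x) / 2) + energy (fun x => (f x - g x) / 2) := by
  simp only [energy, div_eq_inv_mul, ← cubeE_add, ← cubeE_const_mul, ← sum_add_distrib, mul_sum]
  congr! 3
  ring

lemma energy_eq_headMean_add_headDiff (f : (Fin (n + 1) → Bool) → ℝ) :
    energy f = energy (headMean f) + energy (headDiff f)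
      + 4 * cubeE (fun x => headDiff f x ^ 2) := by
  rw [energy_succ, energy_parallelogram, ← cubeE_const_mul]
  congr! 3
  rw [headDiff]
  ring

lemma l1Infl_nonneg (f : (Fin n → Bool) → ℝ) (i : Fin n) : 0 ≤ l1Infl f i :=
  cubeE_nonneg fun _ => abs_nonneg _

lemma l1Infl_zero (f : (Fin (n + 1) → Bool) → ℝ) :
    l1Infl f 0 = 2 * cubeE (fun x => |headDiff f x|) := by
  rw [l1Infl, ← cubeE_headMean, ← cubeE_const_mul]
  congr 1
  funext x
  simp only [headMean, headDiff, face, flipAt_cons_zero, Bool.not_false, Bool.not_true, abs_div,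
    abs_two]
  rw [abs_sub_comm (f (Fin.cons true x))]
  ring

lemma l1Infl_headMean_le (f : (Fin (n + 1) → Bool) → ℝ) (i : Fin n) :
    l1Infl (headMean f) i ≤ l1Infl f i.succ := by
  rw [l1Infl, l1Infl, ← cubeE_headMean fun x => |f x - f (flipAt x i.succ)|]
  refine cubeE_mono fun x => ?_
  simp only [headMean, face, flipAt_cons_succ, ← sub_div, add_sub_add_comm, abs_div, abs_two]
  gcongr
  exact abs_add_le _ _

theorem mul_cubeVar_le_energy_add (s : ℝ) : ∀ {n : ℕ} (f : (Fin n → Bool) → ℝ),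
    s * cubeVar f ≤ energy f + Real.exp (s - 1) / 4 * ∑ i, l1Infl f i ^ 2
  | 0, f => by simp [cubeVar, cubeE_fin_zero, energy_fin_zero]
  | n + 1, f => by
    have ih := mul_cubeVar_le_energy_add s (headMean f)
    have log_sobolev := (mul_cubeE_sq_sub_le_ent_sq s (headDiff f)).trans
      (ent_sq_le_energy (headDiff f))
    have infl_le : Real.exp (s - 1) / 4 * ∑ i, l1Infl (headMean f) i ^ 2
        ≤ Real.exp (s - 1) / 4 * ∑ i : Fin n, l1Infl f i.succ ^ 2 := by
      gcongr with i
      · exact l1Infl_nonneg _ i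
      · exact l1Infl_headMean_le f i
    rw [cubeVar_succ, energy_eq_headMean_add_headDiff, Fin.sum_univ_succ, l1Infl_zero]
    linarith [cubeE_sq_nonneg (headDiff f)]

end MartingaleDecomposition

section BooleanFunctions

variable {n : ℕ}

/-- A Boolean function viewed as a `{0, 1}`-valued real function. -/
def boolToReal (f : (Fin n → Bool) → Bool) : (Fin n → Bool) → ℝ :=
  fun x => if f x then 1 else 0

lemma abs_boolToReal_sub (f : (Fin n → Bool) → Bool) (x y : Fin n → Bool) :
    |boolToReal f x - boolToReal f y| = if f x ≠ f y then 1 else 0 := by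
  unfold boolToReal
  cases f x <;> cases f y <;> simp

lemma l1Infl_boolToReal (f : (Fin n → Bool) → Bool) (i : Fin n) :
    l1Infl (boolToReal f) i = infl f i := by
  simp only [l1Infl, infl, abs_boolToReal_sub]

lemma energy_boolToReal (f : (Fin n → Bool) → Bool) :
    energy (boolToReal f) = ∑ i, infl f i := by
  simp only [energy_eq_sum, infl, ← sq_abs (_ - _), abs_boolToReal_sub, ite_pow, one_pow,
    zero_pow two_ne_zero]

lemma cubeVar_boolToReal (f : (Fin n → Bool) → Bool) :
    cubeVar (boolToReal f) = meanB f * (1 - meanB f) := by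
  have mean : cubeE (boolToReal f) = meanB f := rfl
  have sq_eq_self : (fun x => boolToReal f x ^ 2) = boolToReal f := by
    funext x; simp [boolToReal]
  rw [cubeVar, sq_eq_self, mean]
  ring

lemma meanB_nonneg (f : (Fin n → Bool) → Bool) : 0 ≤ meanB f :=
  cubeE_nonneg fun x => by split_ifs <;> norm_num

lemma meanB_le_one (f : (Fin n → Bool) → Bool) : meanB f ≤ 1 :=
  (cubeE_mono fun x => by split_ifs <;> norm_num).trans_eq (cubeE_const 1)

lemma sum_infl_le_sqrt (f : (Fin n → Bool) → Bool) :
    ∑ i, infl f i ≤ √(n * ∑ i, infl f i ^ 2) :=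
  Real.le_sqrt_of_sq_le <| by simpa using sq_sum_le_card_mul_sum_sq (s := univ) (f := infl f)

theorem mul_meanB_mul_one_sub_meanB_le (s : ℝ) (f : (Fin n → Bool) → Bool) :
    s * (meanB f * (1 - meanB f))
      ≤ √(n * ∑ i, infl f i ^ 2) + Real.exp (s - 1) / 4 * ∑ i, infl f i ^ 2 := by
  have key := mul_cubeVar_le_energy_add s (boolToReal f)
  simp only [cubeVar_boolToReal, energy_boolToReal, l1Infl_boolToReal] at key
  linarith [sum_infl_le_sqrt f]

lemma exp_half_log_sub_one_le_sqrt {x : ℝ} (hx : 0 < x) : Real.exp (Real.log x / 2 - 1) ≤ √x := by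
  calc Real.exp (Real.log x / 2 - 1) ≤ Real.exp (Real.log x / 2) := by gcongr; linarith
    _ = √x := by rw [Real.exp_half, Real.exp_log hx]

lemma log_le_two_mul_sqrt {x : ℝ} (hx : 0 ≤ x) : Real.log x ≤ 2 * √x := by
  linarith [Real.log_le_self (Real.sqrt_nonneg x), Real.log_sqrt hx]

lemma meanB_mul_one_sub_meanB_mul_log_le (hn : 0 < n) (f : (Fin n → Bool) → Bool) :
    meanB f * (1 - meanB f) * Real.log n ≤ 4 * √(n * ∑ i, infl f i ^ 2) := by
  have hn' : (0 : ℝ) < n := Nat.cast_pos.mpr hn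
  have hS : 0 ≤ ∑ i, infl f i ^ 2 := sum_nonneg fun i _ => sq_nonneg _
  have mean_le : meanB f * (1 - meanB f) ≤ 1 / 4 := by linarith [sq_nonneg (meanB f - 1 / 2)]
  have key := mul_meanB_mul_one_sub_meanB_le (Real.log n / 2) f
  set V := meanB f * (1 - meanB f)
  set S := ∑ i, infl f i ^ 2
  have exp_mul_le : Real.exp (Real.log n / 2 - 1) / 4 * S ≤ √n / 4 * S := by
    gcongr; exact exp_half_log_sub_one_le_sqrt hn'
  rw [Real.sqrt_mul hn'.le] at key ⊢
  rcases le_total √S 1 with small | large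
  · have sum_le : S ≤ √S := by nlinarith [Real.sq_sqrt hS, Real.sqrt_nonneg S]
    have : √n / 4 * S ≤ √n / 4 * √S := by gcongr
    have : 0 ≤ √n * √S := by positivity
    linarith
  · have trivial_bound : V * Real.log n ≤ 1 / 4 * (2 * √n) :=
      mul_le_mul mean_le (log_le_two_mul_sqrt hn'.le) (Real.log_natCast_nonneg n) (by norm_num)
    have : √n * 1 ≤ √n * √S := by gcongr
    linarith [Real.sqrt_nonneg n]

end BooleanFunctions

/-- **KKL theorem** (sum-of-squares form): there is an absolute constant `c > 0` such that
for every `n ≥ 2` and every Boolean function `f` on `{0,1}^n` with expectation `μ`,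
`Σ_i I_i(f)² ≥ c · μ²(1-μ)² (log n)² / n`. -/
theorem kkl_sum_of_squared_influences :
    ∃ c : ℝ, 0 < c ∧ ∀ n : ℕ, 2 ≤ n → ∀ f : (Fin n → Bool) → Bool,
      ∑ i : Fin n, (infl f i) ^ 2 ≥
        c * (meanB f) ^ 2 * (1 - meanB f) ^ 2 * (Real.log n) ^ 2 / n := by
  refine ⟨1 / 16, by norm_num, fun n hn f => ?_⟩
  have hn' : 0 < n := by lia
  have mean_nonneg : 0 ≤ meanB f * (1 - meanB f) :=
    mul_nonneg (meanB_nonneg f) (sub_nonneg.mpr (meanB_le_one f))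
  have sq_le : (meanB f * (1 - meanB f) * Real.log n) ^ 2 ≤ 16 * (n * ∑ i, infl f i ^ 2) :=
    calc (meanB f * (1 - meanB f) * Real.log n) ^ 2
        ≤ (4 * √(n * ∑ i, infl f i ^ 2)) ^ 2 :=
          pow_le_pow_left₀ (mul_nonneg mean_nonneg (Real.log_natCast_nonneg n))
            (meanB_mul_one_sub_meanB_mul_log_le hn' f) 2
      _ = 16 * (n * ∑ i, infl f i ^ 2) := by
          rw [mul_pow, Real.sq_sqrt (by positivity)]; norm_num
  rw [ge_iff_le, div_le_iff₀ (Nat.cast_pos.mpr hn')]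
  linarith
end

section
/- There is an absolute constant c > 0 such that for every n ≥ 2 and every Boolean function f : {0,1}^n → {0,1} with expectation μ = E f, there exists an index i ∈ {1,…,n} with influence I_i(f) ≥ c · μ(1−μ) · (log n) / n. -/
open Finset

/-!
Expand `f` in Walsh characters. The variance is the spectral mass `∑ f̂(S)²` over `S ≠ ∅`. The part
with `|S|` at least a small multiple of `log n` is controlled by the total influence, which weights
`f̂(S)²` by `4|S|`. For smaller `S`, consider the discrete derivatives: the one in direction `i`
takes values in `{-1, 0, 1}`, so its `4/3`-norm is much smaller than its `2`-norm when `I_i(f)` is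
small, and hypercontractivity bounds its low-level spectral mass by a small power of `n` times
`I_i(f) ^ (3/2)`. If every influence were below a small multiple of `μ(1 - μ) log n / n`, the two
contributions together would not make up the variance `μ(1 - μ)`.
-/

namespace BooleanCube

variable {n : ℕ}

section Expectation

lemma cubeE_add (f g : (Fin n → Bool) → ℝ) :
    cubeE (fun x => f x + g x) = cubeE f + cubeE g := by
  simp only [cubeE, sum_add_distrib, add_div]

lemma cubeE_const_mul (c : ℝ) (f : (Fin n → Bool) → ℝ) :
    cubeE (fun x => c * f x) = c * cubeE f := by
  simp only [cubeE, ← mul_sum, mul_div_assoc]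

lemma cubeE_sum {ι : Type*} (s : Finset ι) (F : ι → (Fin n → Bool) → ℝ) :
    cubeE (fun x => ∑ i ∈ s, F i x) = ∑ i ∈ s, cubeE (F i) := by
  simp only [cubeE]
  rw [sum_comm, sum_div]

lemma cubeE_nonneg {f : (Fin n → Bool) → ℝ} (hf : ∀ x, 0 ≤ f x) : 0 ≤ cubeE f :=
  div_nonneg (sum_nonneg fun x _ => hf x) (by positivity)

lemma cubeE_mul_sq_le (f g : (Fin n → Bool) → ℝ) :
    cubeE (fun x => f x * g x) ^ 2 ≤ cubeE (fun x => f x ^ 2) * cubeE (fun x => g x ^ 2) := by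
  unfold cubeE
  rw [div_pow, div_mul_div_comm, ← sq]
  gcongr
  exact sum_mul_sq_le_sq_mul_sq _ _ _

lemma cubeE_mul_le_Lp_mul_Lq {p q : ℝ} (hpq : p.HolderConjugate q) (f g : (Fin n → Bool) → ℝ) :
    cubeE (fun x => f x * g x) ≤
      cubeE (fun x => |f x| ^ p) ^ (1 / p) * cubeE (fun x => |g x| ^ q) ^ (1 / q) := by
  have hsplit : (2 ^ n : ℝ) = (2 ^ n) ^ (1 / p) * (2 ^ n) ^ (1 / q) := by
    rw [← Real.rpow_add (by positivity), one_div, one_div, hpq.inv_add_inv_eq_one, Real.rpow_one]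
  unfold cubeE
  rw [Real.div_rpow (by positivity) (by positivity), Real.div_rpow (by positivity) (by positivity),
    div_mul_div_comm, ← hsplit]
  gcongr
  exact Real.inner_le_Lp_mul_Lq univ f g hpq

lemma flipAt_flipAt (x : Fin n → Bool) (i : Fin n) : flipAt (flipAt x i) i = x := by
  simp [flipAt]

lemma cubeE_comp_flipAt (f : (Fin n → Bool) → ℝ) (i : Fin n) :
    cubeE (fun x => f (flipAt x i)) = cubeE f := by
  unfold cubeE
  congr 1
  exact Equiv.sum_comp (Function.Involutive.toPerm (flipAt · i) (flipAt_flipAt · i)) f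

lemma cubeE_eq_zero_of_flipAt_eq_neg {f : (Fin n → Bool) → ℝ} {i : Fin n}
    (hf : ∀ x, f (flipAt x i) = -f x) : cubeE f = 0 := by
  have hneg : cubeE (fun x => f (flipAt x i)) = -cubeE f := by
    simpa [hf] using cubeE_const_mul (-1) f
  linarith [cubeE_comp_flipAt f i]

end Expectation

section Walsh

/-- The character `b ↦ (-1)^b` of a single bit. -/
def boolSign (b : Bool) : ℝ := if b then -1 else 1

lemma boolSign_not (b : Bool) : boolSign (!b) = -boolSign b := by
  cases b <;> simp [boolSign]

lemma boolSign_sq (b : Bool) : boolSign b ^ 2 = 1 := by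
  cases b <;> simp [boolSign]

lemma boolSign_flipAt_self (x : Fin n → Bool) (i : Fin n) :
    boolSign (flipAt x i i) = -boolSign (x i) := by
  simp [flipAt, boolSign_not]

/-- The Walsh character `χ_S(x) = ∏_{i ∈ S} (-1)^{x_i}`. -/
def walsh (S : Finset (Fin n)) (x : Fin n → Bool) : ℝ := ∏ i ∈ S, boolSign (x i)

/-- The Walsh–Fourier coefficient `f̂(S) = E[f χ_S]`. -/
noncomputable def walshCoeff (f : (Fin n → Bool) → ℝ) (S : Finset (Fin n)) : ℝ :=
  cubeE fun x => f x * walsh S x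

/-- The Walsh polynomial `∑_{S ⊆ A} b_S χ_S` in the coordinates of `A`; only the values of `b` on
subsets of `A` matter. -/
def walshSum (A : Finset (Fin n)) (b : Finset (Fin n) → ℝ) (x : Fin n → Bool) : ℝ :=
  ∑ S ∈ A.powerset, b S * walsh S x

lemma walsh_flipAt_of_notMem {S : Finset (Fin n)} {i : Fin n} (hi : i ∉ S) (x : Fin n → Bool) :
    walsh S (flipAt x i) = walsh S x :=
  prod_congr rfl fun j hj => by rw [flipAt, Function.update_of_ne (ne_of_mem_of_not_mem hj hi)]

lemma walsh_insert {S : Finset (Fin n)} {i : Fin n} (hi : i ∉ S) (x : Fin n → Bool) :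
    walsh (insert i S) x = boolSign (x i) * walsh S x :=
  prod_insert hi

lemma walsh_flipAt_of_mem {S : Finset (Fin n)} {i : Fin n} (hi : i ∈ S) (x : Fin n → Bool) :
    walsh S (flipAt x i) = -walsh S x := by
  rw [← insert_erase hi, walsh_insert (notMem_erase i S), walsh_insert (notMem_erase i S),
    walsh_flipAt_of_notMem (notMem_erase i S), boolSign_flipAt_self, neg_mul]

lemma sum_walsh_mul_walsh (x y : Fin n → Bool) :
    ∑ S, walsh S x * walsh S y = if x = y then 2 ^ n else 0 := by
  have hprod : ∑ S, walsh S x * walsh S y = ∏ i, (1 + boolSign (x i) * boolSign (y i)) := by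
    simp only [prod_one_add, powerset_univ, walsh, prod_mul_distrib]
  rw [hprod]
  split_ifs with hxy
  · subst hxy
    simp [← sq, boolSign_sq, one_add_one_eq_two]
  · obtain ⟨i, hi⟩ := Function.ne_iff.mp hxy
    have hyi : y i = !x i := Bool.eq_not.mpr hi.symm
    refine prod_eq_zero (mem_univ i) ?_
    rw [hyi, boolSign_not, mul_neg, ← sq, boolSign_sq, add_neg_cancel]

lemma walshSum_walshCoeff (f : (Fin n → Bool) → ℝ) (x : Fin n → Bool) :
    walshSum univ (walshCoeff f) x = f x := by
  calc walshSum univ (walshCoeff f) x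
      = (∑ S, ∑ y, f y * (walsh S y * walsh S x)) / 2 ^ n := by
        simp only [walshSum, walshCoeff, cubeE, powerset_univ, div_mul_eq_mul_div, sum_mul,
          sum_div, mul_assoc]
    _ = (∑ y, f y * ∑ S, walsh S y * walsh S x) / 2 ^ n := by
        rw [sum_comm]; simp only [mul_sum]
    _ = f x := by simp [sum_walsh_mul_walsh]

lemma cubeE_mul_walshSum (f : (Fin n → Bool) → ℝ) (A : Finset (Fin n))
    (b : Finset (Fin n) → ℝ) :
    cubeE (fun x => f x * walshSum A b x) = ∑ S ∈ A.powerset, b S * walshCoeff f S := by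
  simp only [walshSum, mul_sum, cubeE_sum, mul_left_comm (f _), cubeE_const_mul, walshCoeff]

lemma sum_walshCoeff_sq (f : (Fin n → Bool) → ℝ) :
    ∑ S, walshCoeff f S ^ 2 = cubeE (fun x => f x ^ 2) := by
  simpa only [walshSum_walshCoeff, powerset_univ, ← sq] using
    (cubeE_mul_walshSum f univ (walshCoeff f)).symm

/-- The variance of a real function under the uniform measure on the cube. -/
noncomputable def cubeVar (f : (Fin n → Bool) → ℝ) : ℝ :=
  cubeE (fun x => f x ^ 2) - cubeE f ^ 2

lemma cubeVar_eq_sum_walshCoeff_sq (f : (Fin n → Bool) → ℝ) :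
    cubeVar f = ∑ S ∈ univ.erase ∅, walshCoeff f S ^ 2 := by
  have hempty : walshCoeff f ∅ = cubeE f := by simp [walshCoeff, walsh]
  rw [cubeVar, ← sum_walshCoeff_sq, ← add_sum_erase _ _ (mem_univ ∅), hempty, add_sub_cancel_left]

lemma cubeVar_nonneg (f : (Fin n → Bool) → ℝ) : 0 ≤ cubeVar f := by
  rw [cubeVar_eq_sum_walshCoeff_sq]
  positivity

end Walsh

section Hypercontractivity

lemma walshSum_insert {A : Finset (Fin n)} {i : Fin n} (hi : i ∉ A) (b : Finset (Fin n) → ℝ)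
    (x : Fin n → Bool) :
    walshSum (insert i A) b x =
      walshSum A b x + boolSign (x i) * walshSum A (fun S => b (insert i S)) x := by
  simp only [walshSum, sum_powerset_insert hi, mul_sum]
  congr 1
  refine sum_congr rfl fun S hS => ?_
  rw [walsh_insert fun h => hi (mem_powerset.mp hS h), mul_left_comm]

lemma walshSum_flipAt_of_notMem {A : Finset (Fin n)} {i : Fin n} (hi : i ∉ A)
    (b : Finset (Fin n) → ℝ) (x : Fin n → Bool) :
    walshSum A b (flipAt x i) = walshSum A b x :=
  sum_congr rfl fun S hS => by rw [walsh_flipAt_of_notMem fun h => hi (mem_powerset.mp hS h)]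

lemma cubeE_add_boolSign_mul_pow_four {P Q : (Fin n → Bool) → ℝ} {i : Fin n}
    (hP : ∀ x, P (flipAt x i) = P x) (hQ : ∀ x, Q (flipAt x i) = Q x) :
    cubeE (fun x => (P x + boolSign (x i) * Q x) ^ 4) =
      cubeE (fun x => P x ^ 4) + 6 * cubeE (fun x => P x ^ 2 * Q x ^ 2) +
        cubeE (fun x => Q x ^ 4) := by
  have hodd : cubeE (fun x => boolSign (x i) * (4 * P x ^ 3 * Q x + 4 * P x * Q x ^ 3)) = 0 :=
    cubeE_eq_zero_of_flipAt_eq_neg fun x => by rw [boolSign_flipAt_self, hP, hQ, neg_mul]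
  have hexpand (x : Fin n → Bool) : (P x + boolSign (x i) * Q x) ^ 4 =
      P x ^ 4 + 6 * (P x ^ 2 * Q x ^ 2) + Q x ^ 4 +
        boolSign (x i) * (4 * P x ^ 3 * Q x + 4 * P x * Q x ^ 3) := by
    linear_combination (6 * P x ^ 2 * Q x ^ 2 + 4 * boolSign (x i) * P x * Q x ^ 3 +
      (boolSign (x i) ^ 2 + 1) * Q x ^ 4) * boolSign_sq (x i)
  simp only [hexpand, cubeE_add, cubeE_const_mul, hodd, add_zero]

lemma cubeE_add_boolSign_mul_pow_four_le {P Q : (Fin n → Bool) → ℝ} {i : Fin n} {p q : ℝ}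
    (hP : ∀ x, P (flipAt x i) = P x) (hQ : ∀ x, Q (flipAt x i) = Q x) (hp : 0 ≤ p) (hq : 0 ≤ q)
    (hPp : cubeE (fun x => P x ^ 4) ≤ p ^ 2) (hQq : cubeE (fun x => Q x ^ 4) ≤ q ^ 2) :
    cubeE (fun x => (P x + boolSign (x i) * Q x) ^ 4) ≤ (p + 3 * q) ^ 2 := by
  have hcross : cubeE (fun x => P x ^ 2 * Q x ^ 2) ≤ p * q := by
    refine le_of_sq_le_sq ?_ (mul_nonneg hp hq)
    calc cubeE (fun x => P x ^ 2 * Q x ^ 2) ^ 2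
        ≤ cubeE (fun x => (P x ^ 2) ^ 2) * cubeE (fun x => (Q x ^ 2) ^ 2) := cubeE_mul_sq_le _ _
      _ = cubeE (fun x => P x ^ 4) * cubeE (fun x => Q x ^ 4) := by simp only [← pow_mul]
      _ ≤ p ^ 2 * q ^ 2 :=
          mul_le_mul hPp hQq (cubeE_nonneg fun x => by positivity) (by positivity)
      _ = (p * q) ^ 2 := (mul_pow p q 2).symm
  rw [cubeE_add_boolSign_mul_pow_four hP hQ]
  nlinarith [sq_nonneg q]

/-- **Bonami's inequality** (hypercontractivity from `L²` to `L⁴`) -/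
theorem cubeE_walshSum_pow_four_le (A : Finset (Fin n)) (b : Finset (Fin n) → ℝ) :
    cubeE (fun x => walshSum A b x ^ 4) ≤ (∑ S ∈ A.powerset, 3 ^ #S * b S ^ 2) ^ 2 := by
  induction A using Finset.induction_on generalizing b with
  | empty => exact le_of_eq (by simp [walshSum, walsh, cubeE, ← pow_mul])
  | insert i A hi ih =>
    have hweights : ∑ S ∈ (insert i A).powerset, 3 ^ #S * b S ^ 2 =
        ∑ S ∈ A.powerset, 3 ^ #S * b S ^ 2 +
          3 * ∑ S ∈ A.powerset, 3 ^ #S * b (insert i S) ^ 2 := by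
      rw [sum_powerset_insert hi, mul_sum]
      congr 1
      refine sum_congr rfl fun S hS => ?_
      rw [card_insert_of_notMem fun h => hi (mem_powerset.mp hS h), pow_succ', mul_assoc]
    simp only [walshSum_insert hi, hweights]
    exact cubeE_add_boolSign_mul_pow_four_le (walshSum_flipAt_of_notMem hi _)
      (walshSum_flipAt_of_notMem hi _) (by positivity) (by positivity) (ih _) (ih _)

/-- Dual to Bonami's inequality: the left side is the squared `L²` norm of `T_ρ f` for the noise
operator with `ρ = 1/√3`, the right side the squared `L^(4/3)` norm of `f`. -/
theorem sum_pow_card_mul_walshCoeff_sq_le (f : (Fin n → Bool) → ℝ) :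
    ∑ S, (1 / 3) ^ #S * walshCoeff f S ^ 2 ≤
      cubeE (fun x => |f x| ^ (4 / 3 : ℝ)) ^ (3 / 2 : ℝ) := by
  set N := cubeE (fun x => |f x| ^ (4 / 3 : ℝ))
  set M := ∑ S, (1 / 3 : ℝ) ^ #S * walshCoeff f S ^ 2 with hM
  set h := walshSum univ fun S => (1 / 3) ^ #S * walshCoeff f S
  have hN : 0 ≤ N := cubeE_nonneg fun x => by positivity
  have hM_nonneg : 0 ≤ M := by positivity
  have hpair : cubeE (fun x => f x * h x) = M := by
    simp only [h, cubeE_mul_walshSum, powerset_univ, hM, sq, mul_assoc]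
  have hfour : cubeE (fun x => |h x| ^ (4 : ℝ)) ≤ M ^ 2 := by
    have hcancel (S : Finset (Fin n)) :
        3 ^ #S * ((1 / 3 : ℝ) ^ #S * walshCoeff f S) ^ 2 = (1 / 3) ^ #S * walshCoeff f S ^ 2 := by
      rw [one_div, inv_pow]; field_simp
    have hbonami := cubeE_walshSum_pow_four_le univ fun S => (1 / 3) ^ #S * walshCoeff f S
    simp only [powerset_univ, hcancel] at hbonami
    simpa only [Real.rpow_ofNat, Even.pow_abs (by decide : Even 4)] using hbonami
  have hself : √M * √M ≤ N ^ (3 / 4 : ℝ) * √M := by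
    have hpq : Real.HolderConjugate (4 / 3) 4 := by constructor <;> norm_num
    calc √M * √M = cubeE (fun x => f x * h x) := by rw [Real.mul_self_sqrt hM_nonneg, hpair]
      _ ≤ N ^ (1 / (4 / 3) : ℝ) * cubeE (fun x => |h x| ^ (4 : ℝ)) ^ (1 / 4 : ℝ) :=
          cubeE_mul_le_Lp_mul_Lq hpq f h
      _ ≤ N ^ (1 / (4 / 3) : ℝ) * (M ^ 2) ^ (1 / 4 : ℝ) := by
          gcongr
          exact cubeE_nonneg fun x => by positivity
      _ = N ^ (3 / 4 : ℝ) * √M := by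
          rw [Real.sqrt_eq_rpow, ← Real.rpow_natCast_mul hM_nonneg]; norm_num
  have hsqrt : √M ≤ N ^ (3 / 4 : ℝ) := by
    rcases (Real.sqrt_nonneg M).eq_or_lt with hzero | hpos
    · rw [← hzero]; positivity
    · exact le_of_mul_le_mul_right hself hpos
  calc M = √M ^ 2 := (Real.sq_sqrt hM_nonneg).symm
    _ ≤ (N ^ (3 / 4 : ℝ)) ^ 2 := by gcongr
    _ = N ^ (3 / 2 : ℝ) := by rw [← Real.rpow_mul_natCast hN]; norm_num

end Hypercontractivity

section FlipDiff

/-- The discrete derivative `D_i f(x) = f(x) - f(x ⊕ e_i)`, unnormalised so that it takes values in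
`{-1, 0, 1}` when `f` is `{0, 1}`-valued. -/
def flipDiff (i : Fin n) (f : (Fin n → Bool) → ℝ) (x : Fin n → Bool) : ℝ := f x - f (flipAt x i)

lemma walshCoeff_flipDiff (i : Fin n) (f : (Fin n → Bool) → ℝ) (S : Finset (Fin n)) :
    walshCoeff (flipDiff i f) S = if i ∈ S then 2 * walshCoeff f S else 0 := by
  have hswap : cubeE (fun x => f (flipAt x i) * walsh S x) =
      cubeE (fun x => f x * walsh S (flipAt x i)) := by
    simpa only [flipAt_flipAt] using
      (cubeE_comp_flipAt (fun x => f (flipAt x i) * walsh S x) i).symm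
  have hdiff : walshCoeff (flipDiff i f) S =
      walshCoeff f S + -1 * cubeE (fun x => f x * walsh S (flipAt x i)) := by
    rw [← hswap, walshCoeff, walshCoeff, ← cubeE_const_mul, ← cubeE_add]
    congr 1 with x
    rw [flipDiff]; ring
  rw [hdiff]
  split_ifs with hi
  · simp only [walsh_flipAt_of_mem hi, mul_neg, ← neg_one_mul (f _ * _), cubeE_const_mul]
    rw [← walshCoeff]; ring
  · simp only [walsh_flipAt_of_notMem hi]
    rw [← walshCoeff]; ring

lemma sum_mul_walshCoeff_flipDiff_sq (w : Finset (Fin n) → ℝ) (f : (Fin n → Bool) → ℝ) :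
    ∑ i, ∑ S, w S * walshCoeff (flipDiff i f) S ^ 2 =
      ∑ S, w S * (4 * #S * walshCoeff f S ^ 2) := by
  rw [sum_comm]
  refine sum_congr rfl fun S _ => ?_
  simp only [walshCoeff_flipDiff, ite_pow, ← mul_sum, sum_ite_mem, univ_inter, sum_const,
    zero_pow two_ne_zero, nsmul_eq_mul]
  ring

lemma energy_eq_sum_cubeE_flipDiff_sq (f : (Fin n → Bool) → ℝ) :
    energy f = ∑ i, cubeE (fun x => flipDiff i f x ^ 2) :=
  cubeE_sum univ fun i x => flipDiff i f x ^ 2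

lemma energy_eq_sum_card_mul_walshCoeff_sq (f : (Fin n → Bool) → ℝ) :
    energy f = ∑ S, 4 * #S * walshCoeff f S ^ 2 := by
  simpa only [energy_eq_sum_cubeE_flipDiff_sq, sum_walshCoeff_sq, one_mul] using
    sum_mul_walshCoeff_flipDiff_sq (fun _ => 1) f

lemma one_le_two_mul_div_log_add {T : ℝ} (hT : 1 < T) {s : ℕ} (hs : s ≠ 0) :
    1 ≤ 2 * s / Real.log T + T * ((1 / 3) ^ s * s) := by
  have hlog : 0 < Real.log T := Real.log_pos hT
  rcases le_or_gt (Real.log T) (2 * s) with hlarge | hsmall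
  · have hfirst : 1 ≤ 2 * s / Real.log T := (one_le_div hlog).mpr hlarge
    have hsecond : 0 ≤ T * ((1 / 3) ^ s * s) := by positivity
    linarith
  · have hlog_three : Real.log 3 ≤ 2 := by
      linarith [Real.log_le_sub_one_of_pos (show (0 : ℝ) < 3 by norm_num)]
    have hpow : (3 : ℝ) ^ s ≤ T := by
      rw [← Real.log_le_log_iff (by positivity) (by positivity), Real.log_pow]
      nlinarith [s.cast_nonneg (α := ℝ)]
    have hs_one : (1 : ℝ) ≤ s := by exact_mod_cast Nat.one_le_iff_ne_zero.mpr hs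
    have hfirst : 0 ≤ 2 * s / Real.log T := by positivity
    have hsecond : 1 ≤ T * ((1 / 3) ^ s * s) := by
      calc (1 : ℝ) = 3 ^ s * ((1 / 3) ^ s * 1) := by rw [mul_one, ← mul_pow]; norm_num
        _ ≤ T * ((1 / 3) ^ s * s) := by gcongr
    linarith

theorem four_mul_cubeVar_le {T : ℝ} (hT : 1 < T) (f : (Fin n → Bool) → ℝ) :
    4 * cubeVar f ≤ 2 / Real.log T * energy f +
      T * ∑ i, cubeE (fun x => |flipDiff i f x| ^ (4 / 3 : ℝ)) ^ (3 / 2 : ℝ) := by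
  have hlog : 0 < Real.log T := Real.log_pos hT
  calc 4 * cubeVar f = ∑ S ∈ univ.erase ∅, 1 * (4 * walshCoeff f S ^ 2) := by
        simp only [cubeVar_eq_sum_walshCoeff_sq, mul_sum, one_mul]
    _ ≤ ∑ S ∈ univ.erase ∅,
          (2 * #S / Real.log T + T * ((1 / 3) ^ #S * #S)) * (4 * walshCoeff f S ^ 2) := by
        gcongr with S hS
        exact one_le_two_mul_div_log_add hT (card_ne_zero.mpr
          (nonempty_iff_ne_empty.mpr (ne_of_mem_erase hS)))
    _ ≤ ∑ S, (2 * #S / Real.log T + T * ((1 / 3) ^ #S * #S)) * (4 * walshCoeff f S ^ 2) :=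
        sum_le_sum_of_subset_of_nonneg (erase_subset _ _) fun S _ _ => by positivity
    _ = 2 / Real.log T * energy f +
          T * ∑ i, ∑ S, (1 / 3) ^ #S * walshCoeff (flipDiff i f) S ^ 2 := by
        rw [energy_eq_sum_card_mul_walshCoeff_sq, sum_mul_walshCoeff_flipDiff_sq, mul_sum, mul_sum,
          ← sum_add_distrib]
        exact sum_congr rfl fun S _ => by ring
    _ ≤ _ := by
        gcongr with i
        exact sum_pow_card_mul_walshCoeff_sq_le _

end FlipDiff

section Influence

/-- A Boolean function regarded as a `{0, 1}`-valued real function. -/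
def toReal (f : (Fin n → Bool) → Bool) (x : Fin n → Bool) : ℝ := if f x then 1 else 0

lemma cubeVar_toReal (f : (Fin n → Bool) → Bool) :
    cubeVar (toReal f) = meanB f * (1 - meanB f) := by
  have hsq (x : Fin n → Bool) : toReal f x ^ 2 = toReal f x := by
    unfold toReal; split_ifs <;> norm_num
  have hmean : cubeE (toReal f) = meanB f := rfl
  simp only [cubeVar, hsq, hmean]
  ring

lemma meanB_mul_one_sub_nonneg (f : (Fin n → Bool) → Bool) : 0 ≤ meanB f * (1 - meanB f) :=
  cubeVar_toReal f ▸ cubeVar_nonneg _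

lemma cubeE_abs_flipDiff_toReal_rpow (f : (Fin n → Bool) → Bool) (i : Fin n) {p : ℝ}
    (hp : p ≠ 0) : cubeE (fun x => |flipDiff i (toReal f) x| ^ p) = infl f i := by
  unfold infl
  congr 1 with x
  cases hx : f x <;> cases hy : f (flipAt x i) <;> simp [flipDiff, toReal, hx, hy, hp]

lemma energy_toReal (f : (Fin n → Bool) → Bool) : energy (toReal f) = ∑ i, infl f i := by
  rw [energy_eq_sum_cubeE_flipDiff_sq]
  refine sum_congr rfl fun i _ => ?_
  simpa only [Real.rpow_ofNat, sq_abs] using cubeE_abs_flipDiff_toReal_rpow f i two_ne_zero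

lemma infl_nonneg (f : (Fin n → Bool) → Bool) (i : Fin n) : 0 ≤ infl f i :=
  cubeE_nonneg fun x => by split_ifs <;> norm_num

theorem four_mul_meanB_mul_one_sub_le {T : ℝ} (hT : 1 < T) (f : (Fin n → Bool) → Bool) :
    4 * (meanB f * (1 - meanB f)) ≤
      2 / Real.log T * ∑ i, infl f i + T * ∑ i, infl f i ^ (3 / 2 : ℝ) := by
  have hbound := four_mul_cubeVar_le hT (toReal f)
  simpa only [cubeVar_toReal, energy_toReal,
    cubeE_abs_flipDiff_toReal_rpow f _ (show (4 / 3 : ℝ) ≠ 0 by norm_num)] using hbound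

lemma four_mul_meanB_mul_one_sub_le_of_infl_le (hn : 2 ≤ n) {f : (Fin n → Bool) → Bool} {δ : ℝ}
    (hδ : ∀ i, infl f i ≤ δ) :
    4 * (meanB f * (1 - meanB f)) ≤
      8 * n * δ / Real.log n + n ^ (5 / 4 : ℝ) * δ ^ (3 / 2 : ℝ) := by
  have hn_one : (1 : ℝ) < n := by exact_mod_cast hn
  have hn_pos : (0 : ℝ) < n := by positivity
  have hT : 1 < (n : ℝ) ^ (1 / 4 : ℝ) := Real.one_lt_rpow hn_one (by norm_num)
  calc 4 * (meanB f * (1 - meanB f))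
      ≤ 2 / Real.log (n ^ (1 / 4 : ℝ)) * ∑ i, infl f i +
          n ^ (1 / 4 : ℝ) * ∑ i, infl f i ^ (3 / 2 : ℝ) := four_mul_meanB_mul_one_sub_le hT f
    _ ≤ 2 / Real.log (n ^ (1 / 4 : ℝ)) * ∑ _i : Fin n, δ +
          n ^ (1 / 4 : ℝ) * ∑ _i : Fin n, δ ^ (3 / 2 : ℝ) := by
        gcongr with i _ i
        · exact div_nonneg zero_le_two (Real.log_nonneg hT.le)
        · exact hδ i
        · exact infl_nonneg f i
        · exact hδ i
    _ = 8 * n * δ / Real.log n + n ^ (1 / 4 + 1 : ℝ) * δ ^ (3 / 2 : ℝ) := by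
        rw [Real.log_rpow hn_pos, Real.rpow_add_one hn_pos.ne']
        simp only [sum_const, card_univ, Fintype.card_fin, nsmul_eq_mul]
        field_simp
        ring
    _ = _ := by norm_num

lemma rpow_mul_mul_log_div_rpow_le {x w : ℝ} (hx : 1 ≤ x) (hw : 0 ≤ w) (hw_one : w ≤ 1) :
    x ^ (5 / 4 : ℝ) * (w * Real.log x / (6 * x)) ^ (3 / 2 : ℝ) ≤ w := by
  have hx_pos : 0 < x := one_pos.trans_le hx
  have hlog : Real.log x ≤ 6 * x ^ (1 / 6 : ℝ) := by
    linarith [Real.log_le_rpow_div hx_pos.le (show (0 : ℝ) < 1 / 6 by norm_num)]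
  have hlog_nonneg : 0 ≤ Real.log x := Real.log_nonneg hx
  have hbase : w * Real.log x / (6 * x) ≤ w * x ^ (-5 / 6 : ℝ) := by
    calc w * Real.log x / (6 * x) ≤ w * (6 * x ^ (1 / 6 : ℝ)) / (6 * x) := by gcongr
      _ = w * x ^ (1 / 6 - 1 : ℝ) := by rw [Real.rpow_sub_one hx_pos.ne']; field_simp
      _ = w * x ^ (-5 / 6 : ℝ) := by norm_num
  calc x ^ (5 / 4 : ℝ) * (w * Real.log x / (6 * x)) ^ (3 / 2 : ℝ)
      ≤ x ^ (5 / 4 : ℝ) * (w * x ^ (-5 / 6 : ℝ)) ^ (3 / 2 : ℝ) := by gcongr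
    _ = x ^ (5 / 4 : ℝ) * x ^ (-5 / 6 * (3 / 2) : ℝ) * w ^ (3 / 2 : ℝ) := by
        rw [Real.mul_rpow hw (by positivity), ← Real.rpow_mul hx_pos.le]; ring
    _ = w ^ (3 / 2 : ℝ) := by rw [← Real.rpow_add hx_pos]; norm_num
    _ ≤ w := Real.rpow_le_self_of_le_one hw hw_one (by norm_num)

end Influence

end BooleanCube

/-- **KKL theorem**: there is an absolute constant `c > 0` such that for every `n ≥ 2`
and every Boolean function `f` on `{0,1}^n` with expectation `μ`, some variable has
influence at least `c · μ(1-μ) log n / n`. -/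
theorem kkl_max_influence :
    ∃ c : ℝ, 0 < c ∧ ∀ n : ℕ, 2 ≤ n → ∀ f : (Fin n → Bool) → Bool,
      ∃ i : Fin n, infl f i ≥ c * meanB f * (1 - meanB f) * Real.log n / n := by
  refine ⟨1 / 6, by norm_num, fun n hn f => ?_⟩
  by_contra! hlt
  set W := meanB f * (1 - meanB f) with hW
  set δ := W * Real.log n / (6 * n) with hδ
  have hn_one : (1 : ℝ) < n := by exact_mod_cast hn
  have hlog : 0 < Real.log n := Real.log_pos hn_one
  have hinfl (i : Fin n) : infl f i < δ := (hlt i).trans_eq (by rw [hδ, hW]; field_simp)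
  have hW_nonneg : 0 ≤ W := BooleanCube.meanB_mul_one_sub_nonneg f
  have hW_one : W ≤ 1 := by nlinarith [sq_nonneg (meanB f - 1 / 2)]
  have hfirst : 8 * n * δ / Real.log n = 4 / 3 * W := by rw [hδ]; field_simp; ring
  have hsecond : (n : ℝ) ^ (5 / 4 : ℝ) * δ ^ (3 / 2 : ℝ) ≤ W :=
    BooleanCube.rpow_mul_mul_log_div_rpow_le hn_one.le hW_nonneg hW_one
  have hvar := BooleanCube.four_mul_meanB_mul_one_sub_le_of_infl_le hn fun i => (hinfl i).le
  have hW_zero : W = 0 := by linarith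
  have hδ_zero : δ = 0 := by rw [hδ, hW_zero]; simp
  exact ((BooleanCube.infl_nonneg f ⟨0, by omega⟩).trans_lt (hinfl _)).ne' hδ_zero
end

section
/- Let μ = ⊗_{k=1}^n μ_k be a product probability measure on {0,1}^n with μ_k(1) = p_k and μ_k(0) = 1 − p_k, and let f : {0,1}^n → ℝ. For 1 ≤ i ≤ n let f_i = E(f | F_i) be the conditional expectation of f given the first i coordinates (computed with respect to μ), and d_i = f_i − f_{i−1}. Then E_μ |d_i| ≤ 2 p_i (1 − p_i) · E_{x∼μ} | f(x) − f(x⊕e_i) |. -/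
open Finset

/-- Weight of the point `x` under the product measure `μ = ⊗ μ_k`
with `μ_k(1) = p_k`, `μ_k(0) = 1 - p_k`. -/
noncomputable def prodWt {n : ℕ} (p : Fin n → ℝ) (x : Fin n → Bool) : ℝ :=
  ∏ k : Fin n, if x k then p k else 1 - p k

/-- Expectation with respect to the product measure determined by `p`. -/
noncomputable def prodE {n : ℕ} (p : Fin n → ℝ) (f : (Fin n → Bool) → ℝ) : ℝ :=
  ∑ x : Fin n → Bool, prodWt p x * f x

/-- Conditional expectation `E(f | F_j)` given the first `j` coordinates, with respect to
the product measure determined by `p`: the `μ`-average of `f` over the points `y` agreeing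
with `x` in the first `j` coordinates. -/
noncomputable def prodCondE {n : ℕ} (p : Fin n → ℝ) (f : (Fin n → Bool) → ℝ) (j : ℕ)
    (x : Fin n → Bool) : ℝ :=
  ∑ y : Fin n → Bool,
    if ∀ k : Fin n, (k : ℕ) < j → y k = x k then
      (∏ k ∈ Finset.univ.filter fun k : Fin n => j ≤ (k : ℕ),
        if y k then p k else 1 - p k) * f y
    else 0

/-!
Writing `w` for the Bernoulli weight of coordinate `i`, averaging out that coordinate gives
`d_i(x) = w(1 - x_i) (f_i(x) - f_i(x ⊕ e_i))`. The flip of a coordinate in the conditioning set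
passes through the conditional expectation, so by the triangle inequality `|d_i|` is at most
`w(1 - x_i)` times the conditional expectation of `g(x) = |f(x) - f(x ⊕ e_i)|`. The latter is
invariant under the flip, hence independent of `x_i`, and `E w(1 - x_i) = 2 p_i (1 - p_i)`.
-/

section Weights

/-- The mass that the Bernoulli measure with success probability `q` gives to `b`; it makes
`prodWt p x` definitionally the product of the `bernoulliWt (p k) (x k)`. -/
noncomputable def bernoulliWt (q : ℝ) (b : Bool) : ℝ :=
  if b then q else 1 - q

theorem bernoulliWt_add_bernoulliWt_not (q : ℝ) (b : Bool) :
    bernoulliWt q b + bernoulliWt q (!b) = 1 := by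
  cases b <;> simp [bernoulliWt]

theorem sum_bernoulliWt (q : ℝ) : ∑ b, bernoulliWt q b = 1 := by
  simp [bernoulliWt]

theorem sum_bernoulliWt_mul_bernoulliWt_not (q : ℝ) :
    ∑ b, bernoulliWt q b * bernoulliWt q (!b) = 2 * q * (1 - q) := by
  simp only [bernoulliWt, Fintype.sum_bool, Bool.not_true, Bool.not_false, if_true,
    Bool.false_eq_true, if_false]
  ring

theorem bernoulliWt_nonneg {q : ℝ} (hq : 0 ≤ q ∧ q ≤ 1) (b : Bool) : 0 ≤ bernoulliWt q b := by
  cases b <;> simp [bernoulliWt, hq]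

theorem sum_bool_eq_add_not {M : Type*} [AddCommMonoid M] (g : Bool → M) (c : Bool) :
    ∑ b, g b = g c + g (!c) := by
  cases c <;> simp [add_comm]

end Weights

section Flip

variable {n : ℕ}

theorem flipAt_self (x : Fin n → Bool) (i : Fin n) : flipAt x i i = !x i :=
  Function.update_self ..

theorem flipAt_of_ne {i k : Fin n} (h : k ≠ i) (x : Fin n → Bool) : flipAt x i k = x k :=
  Function.update_of_ne h ..

theorem flipAt_involutive (i : Fin n) : Function.Involutive (flipAt · i) := fun x => by
  simp [flipAt]

theorem sum_comp_flipAt {M : Type*} [AddCommMonoid M] (i : Fin n) (F : (Fin n → Bool) → M) :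
    ∑ x, F (flipAt x i) = ∑ x, F x :=
  Equiv.sum_comp (flipAt_involutive i).toPerm F

theorem apply_update_of_flipAt_invariant {α : Type*} {i : Fin n} {H : (Fin n → Bool) → α}
    (hH : ∀ x, H (flipAt x i) = H x) (x : Fin n → Bool) (b : Bool) :
    H (Function.update x i b) = H x := by
  obtain rfl | rfl := Bool.eq_or_eq_not b (x i)
  · rw [Function.update_eq_self]
  · exact hH x

theorem piecewise_flipAt {S : Finset (Fin n)} {i : Fin n} (hi : i ∈ S) (x y : Fin n → Bool) :
    S.piecewise (flipAt x i) y = flipAt (S.piecewise x y) i := by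
  rw [flipAt, flipAt, S.update_piecewise_of_mem _ _ hi, S.piecewise_eq_of_mem _ _ hi]

theorem prodWt_flipAt_mul (p : Fin n → ℝ) (x : Fin n → Bool) (i : Fin n) :
    prodWt p (flipAt x i) * bernoulliWt (p i) (x i) =
      prodWt p x * bernoulliWt (p i) (!x i) := by
  have prodWt_split (z : Fin n → Bool) :
      prodWt p z = bernoulliWt (p i) (z i) * ∏ k ∈ univ.erase i, bernoulliWt (p k) (z k) :=
    (mul_prod_erase univ (fun k => bernoulliWt (p k) (z k)) (mem_univ i)).symm
  have off_i : ∏ k ∈ univ.erase i, bernoulliWt (p k) (flipAt x i k) =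
      ∏ k ∈ univ.erase i, bernoulliWt (p k) (x k) :=
    prod_congr rfl fun k hk => by rw [flipAt_of_ne (ne_of_mem_erase hk)]
  rw [prodWt_split, prodWt_split x, off_i, flipAt_self]
  ring

end Flip

section Expectation

variable {n : ℕ} {p : Fin n → ℝ}

theorem prodE_prod (p : Fin n → ℝ) (h : Fin n → Bool → ℝ) :
    prodE p (fun x => ∏ k, h k (x k)) = ∏ k, ∑ b, bernoulliWt (p k) b * h k b := by
  rw [Fintype.prod_sum]
  simp only [prod_mul_distrib]
  rfl

theorem prodE_const (p : Fin n → ℝ) (c : ℝ) : prodE p (fun _ => c) = c := by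
  have mass_one : ∑ x, prodWt p x = 1 := by
    simpa only [prodE, mul_one, prod_const_one, sum_bernoulliWt] using prodE_prod p fun _ _ => 1
  rw [prodE, ← sum_mul, mass_one, one_mul]

theorem prodE_add (p : Fin n → ℝ) (f g : (Fin n → Bool) → ℝ) :
    prodE p (fun x => f x + g x) = prodE p f + prodE p g := by
  simp only [prodE, mul_add, sum_add_distrib]

theorem prodE_sub (p : Fin n → ℝ) (f g : (Fin n → Bool) → ℝ) :
    prodE p (fun x => f x - g x) = prodE p f - prodE p g := by
  simp only [prodE, mul_sub, sum_sub_distrib]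

theorem prodE_const_mul (p : Fin n → ℝ) (c : ℝ) (f : (Fin n → Bool) → ℝ) :
    prodE p (fun x => c * f x) = c * prodE p f := by
  simp only [prodE, mul_sum, mul_left_comm]

theorem prodWt_nonneg (hp : ∀ k, 0 ≤ p k ∧ p k ≤ 1) (x : Fin n → Bool) : 0 ≤ prodWt p x :=
  prod_nonneg fun k _ => bernoulliWt_nonneg (hp k) (x k)

theorem prodE_mono (hp : ∀ k, 0 ≤ p k ∧ p k ≤ 1) {f g : (Fin n → Bool) → ℝ}
    (hfg : ∀ x, f x ≤ g x) : prodE p f ≤ prodE p g :=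
  sum_le_sum fun x _ => mul_le_mul_of_nonneg_left (hfg x) (prodWt_nonneg hp x)

theorem abs_prodE_le (hp : ∀ k, 0 ≤ p k ∧ p k ≤ 1) (f : (Fin n → Bool) → ℝ) :
    |prodE p f| ≤ prodE p (fun x => |f x|) :=
  (abs_sum_le_sum_abs _ _).trans_eq <| sum_congr rfl fun x _ => by
    rw [abs_mul, abs_of_nonneg (prodWt_nonneg hp x)]

theorem prodE_eq_prodE_sum_update (p : Fin n → ℝ) (G : (Fin n → Bool) → ℝ) (i : Fin n) :
    prodE p G =
      prodE p (fun x => ∑ b, bernoulliWt (p i) b * G (Function.update x i b)) := by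
  symm
  calc prodE p (fun x => ∑ b, bernoulliWt (p i) b * G (Function.update x i b))
    _ = ∑ x, prodWt p x * (bernoulliWt (p i) (x i) * G x) +
          ∑ x, prodWt p x * bernoulliWt (p i) (!x i) * G (flipAt x i) := by
        rw [prodE, ← sum_add_distrib]
        refine sum_congr rfl fun x _ => ?_
        rw [sum_bool_eq_add_not _ (x i), Function.update_eq_self, flipAt]
        ring
    _ = ∑ x, prodWt p x * (bernoulliWt (p i) (x i) * G x) +
          ∑ x, prodWt p x * bernoulliWt (p i) (!x i) * G x := by
        rw [← sum_comp_flipAt i fun x => prodWt p x * bernoulliWt (p i) (!x i) * G x]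
        simp only [flipAt_self, Bool.not_not, prodWt_flipAt_mul]
    _ = prodE p G := by
        rw [prodE, ← sum_add_distrib]
        refine sum_congr rfl fun x _ => ?_
        linear_combination prodWt p x * G x * bernoulliWt_add_bernoulliWt_not (p i) (x i)

theorem prodE_mul_of_flipAt_invariant (p : Fin n → ℝ) {H : (Fin n → Bool) → ℝ} {i : Fin n}
    (hH : ∀ x, H (flipAt x i) = H x) (φ : Bool → ℝ) :
    prodE p (fun x => φ (x i) * H x) = (∑ b, bernoulliWt (p i) b * φ b) * prodE p H := by
  rw [prodE_eq_prodE_sum_update p _ i, ← prodE_const_mul]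
  simp only [Function.update_self, apply_update_of_flipAt_invariant hH, sum_mul, mul_assoc]

end Expectation

section ConditionalExpectation

variable {n : ℕ} {p : Fin n → ℝ} {S : Finset (Fin n)} {i : Fin n}

/-- Conditional expectation of `f` given the coordinates in `S`, with respect to the product
measure determined by `p`. By independence, it is computed by resampling all coordinates
outside `S`; `prodCondE p f j` is the case of the first `j` coordinates. -/
noncomputable def coordCondE (p : Fin n → ℝ) (f : (Fin n → Bool) → ℝ) (S : Finset (Fin n))
    (x : Fin n → Bool) : ℝ :=
  prodE p (fun y => f (S.piecewise x y))

theorem prodE_indicator_piecewise_eq (p : Fin n → ℝ) (S : Finset (Fin n))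
    (x y : Fin n → Bool) :
    prodE p (fun z => if S.piecewise x z = y then 1 else 0) =
      if ∀ k ∈ S, y k = x k then ∏ k ∈ Sᶜ, bernoulliWt (p k) (y k) else 0 := by
  have factor (z : Fin n → Bool) : (if S.piecewise x z = y then (1 : ℝ) else 0) =
      ∏ k, if (if k ∈ S then x k else z k) = y k then 1 else 0 := by
    simp only [prod_boole, funext_iff, mem_univ, true_implies, Finset.piecewise]
  have inside : ∏ k ∈ S, ∑ b, bernoulliWt (p k) b *
      (if (if k ∈ S then x k else b) = y k then 1 else 0) =
        if ∀ k ∈ S, y k = x k then 1 else 0 := by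
    calc _ = ∏ k ∈ S, if y k = x k then (1 : ℝ) else 0 := by
          refine prod_congr rfl fun k hk => ?_
          simp only [hk, if_true, ← sum_mul, sum_bernoulliWt, one_mul, eq_comm]
      _ = _ := by convert prod_boole
  have outside : ∏ k ∈ Sᶜ, ∑ b, bernoulliWt (p k) b *
      (if (if k ∈ S then x k else b) = y k then 1 else 0) =
        ∏ k ∈ Sᶜ, bernoulliWt (p k) (y k) := by
    refine prod_congr rfl fun k hk => ?_
    simp only [mem_compl.mp hk, if_false, mul_ite, mul_one, mul_zero, sum_ite_eq', mem_univ,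
      if_true]
  simp only [factor]
  rw [prodE_prod p fun k b => if (if k ∈ S then x k else b) = y k then 1 else 0,
    ← prod_mul_prod_compl S, inside, outside, ite_mul, one_mul, zero_mul]

theorem coordCondE_eq_sum (p : Fin n → ℝ) (f : (Fin n → Bool) → ℝ) (S : Finset (Fin n))
    (x : Fin n → Bool) :
    coordCondE p f S x =
      ∑ y, if ∀ k ∈ S, y k = x k then (∏ k ∈ Sᶜ, bernoulliWt (p k) (y k)) * f y else 0 := by
  calc coordCondE p f S x
    _ = ∑ z, ∑ y, prodWt p z * (if S.piecewise x z = y then 1 else 0) * f y := by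
        simp [coordCondE, prodE]
    _ = ∑ y, prodE p (fun z => if S.piecewise x z = y then 1 else 0) * f y := by
        rw [sum_comm]
        simp only [prodE, sum_mul]
    _ = _ := by
        simp only [prodE_indicator_piecewise_eq, ite_mul, zero_mul]

theorem prodCondE_eq_coordCondE (p : Fin n → ℝ) (f : (Fin n → Bool) → ℝ) (j : ℕ) :
    prodCondE p f j = coordCondE p f {k | (k : ℕ) < j} := by
  ext x
  simp only [coordCondE_eq_sum, compl_filter, not_lt, mem_filter, mem_univ, true_and]
  rfl

theorem coordCondE_eq_add_flipAt (p : Fin n → ℝ) (f : (Fin n → Bool) → ℝ) (hi : i ∉ S)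
    (x : Fin n → Bool) :
    coordCondE p f S x =
      bernoulliWt (p i) (x i) * coordCondE p f (insert i S) x +
        bernoulliWt (p i) (!x i) * coordCondE p f (insert i S) (flipAt x i) := by
  have piecewise_update (y : Fin n → Bool) (b : Bool) :
      S.piecewise x (Function.update y i b) =
        (insert i S).piecewise (Function.update x i b) y := by
    rw [piecewise_insert, Function.update_self, ← S.update_piecewise_of_notMem _ _ hi,
      S.piecewise_congr (fun k hk => (Function.update_of_ne (ne_of_mem_of_not_mem hk hi) ..).symm)
        fun _ _ => rfl]
  simp only [coordCondE, ← prodE_const_mul, ← prodE_add]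
  rw [prodE_eq_prodE_sum_update p _ i]
  simp only [piecewise_update, sum_bool_eq_add_not _ (x i), Function.update_eq_self, flipAt]

theorem coordCondE_insert_sub (p : Fin n → ℝ) (f : (Fin n → Bool) → ℝ) (hi : i ∉ S)
    (x : Fin n → Bool) :
    coordCondE p f (insert i S) x - coordCondE p f S x =
      bernoulliWt (p i) (!x i) *
        (coordCondE p f (insert i S) x - coordCondE p f (insert i S) (flipAt x i)) := by
  rw [coordCondE_eq_add_flipAt p f hi]
  linear_combination
    -coordCondE p f (insert i S) x * bernoulliWt_add_bernoulliWt_not (p i) (x i)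

theorem coordCondE_flipAt (p : Fin n → ℝ) (f : (Fin n → Bool) → ℝ) (hi : i ∈ S)
    (x : Fin n → Bool) :
    coordCondE p f S (flipAt x i) = coordCondE p (fun y => f (flipAt y i)) S x := by
  simp only [coordCondE, piecewise_flipAt hi]

theorem abs_coordCondE_sub_le (hp : ∀ k, 0 ≤ p k ∧ p k ≤ 1) (f g : (Fin n → Bool) → ℝ)
    (S : Finset (Fin n)) (x : Fin n → Bool) :
    |coordCondE p f S x - coordCondE p g S x| ≤ coordCondE p (fun y => |f y - g y|) S x := by
  rw [coordCondE, coordCondE, ← prodE_sub]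
  exact abs_prodE_le hp _

theorem prodE_coordCondE (p : Fin n → ℝ) (f : (Fin n → Bool) → ℝ) (S : Finset (Fin n)) :
    prodE p (coordCondE p f S) = prodE p f := by
  induction S using Finset.induction_on with
  | empty =>
    unfold coordCondE
    simp only [piecewise_empty, prodE_const]
  | insert i S hi ih =>
    rw [← ih, prodE_eq_prodE_sum_update p _ i]
    congr 1 with x
    rw [coordCondE_eq_add_flipAt p f hi, sum_bool_eq_add_not _ (x i), Function.update_eq_self,
      flipAt]

end ConditionalExpectation

theorem abs_martingale_difference_le_general {n : ℕ} (p : Fin n → ℝ)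
    (hp : ∀ k, 0 ≤ p k ∧ p k ≤ 1) (f : (Fin n → Bool) → ℝ) {S : Finset (Fin n)} {i : Fin n}
    (hi : i ∉ S) :
    prodE p (fun x => |coordCondE p f (insert i S) x - coordCondE p f S x|) ≤
      2 * p i * (1 - p i) * prodE p (fun x => |f x - f (flipAt x i)|) := by
  set g : (Fin n → Bool) → ℝ := fun x => |f x - f (flipAt x i)|
  have g_flip (x : Fin n → Bool) : g (flipAt x i) = g x := by
    simp only [g, flipAt_involutive i x, abs_sub_comm]
  have i_mem : i ∈ insert i S := mem_insert_self i S
  have pointwise (x : Fin n → Bool) :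
      |coordCondE p f (insert i S) x - coordCondE p f S x| ≤
        bernoulliWt (p i) (!x i) * coordCondE p g (insert i S) x := by
    have weight_nonneg := bernoulliWt_nonneg (hp i) (!x i)
    rw [coordCondE_insert_sub p f hi, abs_mul, abs_of_nonneg weight_nonneg,
      coordCondE_flipAt p f i_mem]
    exact mul_le_mul_of_nonneg_left (abs_coordCondE_sub_le hp ..) weight_nonneg
  have condE_g_flip (x : Fin n → Bool) :
      coordCondE p g (insert i S) (flipAt x i) = coordCondE p g (insert i S) x := by
    simp only [coordCondE_flipAt p g i_mem, g_flip]
  calc prodE p (fun x => |coordCondE p f (insert i S) x - coordCondE p f S x|)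
    _ ≤ prodE p (fun x => bernoulliWt (p i) (!x i) * coordCondE p g (insert i S) x) :=
        prodE_mono hp pointwise
    _ = 2 * p i * (1 - p i) * prodE p (coordCondE p g (insert i S)) := by
        rw [prodE_mul_of_flipAt_invariant p condE_g_flip fun b => bernoulliWt (p i) (!b),
          sum_bernoulliWt_mul_bernoulliWt_not]
    _ = 2 * p i * (1 - p i) * prodE p g := by rw [prodE_coordCondE]

/-- For a product measure `μ` on `{0,1}^n`, the martingale differences
`d_i = E(f|F_i) - E(f|F_{i-1})` satisfy
`E_μ |d_i| ≤ 2 p_i (1-p_i) · E_{x∼μ} |f(x) - f(x⊕e_i)|`. -/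
theorem abs_martingale_difference_le {n : ℕ} (p : Fin n → ℝ)
    (hp : ∀ k, 0 ≤ p k ∧ p k ≤ 1) (f : (Fin n → Bool) → ℝ) (i : Fin n) :
    prodE p (fun x => |prodCondE p f ((i : ℕ) + 1) x - prodCondE p f (i : ℕ) x|) ≤
      2 * p i * (1 - p i) * prodE p (fun x => |f x - f (flipAt x i)|) := by
  have segment_succ : ({k | (k : ℕ) < i + 1} : Finset (Fin n)) =
      insert i ({k | (k : ℕ) < i} : Finset (Fin n)) := by
    ext k
    simp only [mem_filter, mem_univ, true_and, mem_insert, Fin.ext_iff]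
    omega
  rw [prodCondE_eq_coordCondE, prodCondE_eq_coordCondE, segment_succ]
  exact abs_martingale_difference_le_general p hp f (by simp)
end
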